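/- arXiv:math/0612331 — 6 statements merged into one kernel-verified Lean document; each statement's English description precedes it below -/
import Mathlib

section
/- Let F be a field with F ≠ F₂ (i.e., F has more than two elements). Then mr(F, full house) = 2, where the full house is the graph on vertex set {1,2,3,4,5} with edge set {12, 13, 23, 24, 25, 34, 35, 45}. -/
/-!
The vertices `0` and `3` are not adjacent, while `01` and `34` are edges. Hence in every matrix of
the graph the submatrix on rows `0, 4` and columns `1, 3` is lower triangular with nonzero diagonal,
so the rank is at least `2` (`two_le_rank_of_isGraphMatrix_fullHouse`).

Conversely, take `a ≠ 0, 1` and consider the bilinear form `diag(1, -a)` on `F²`. The Gram matrix of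
`e₁, e₁ + e₂, e₁ + e₂, e₂, e₂` has rank at most `2`. Its zero off-diagonal entries are
exactly those at the non-edges `03` and `04`, as the remaining ones are `1`, `-a` and `1 - a`.
-/

open Matrix

/-- `A` is a symmetric matrix over `F` whose off-diagonal nonzero pattern is
given by the graph `G` (diagonal entries are unconstrained). -/
def IsGraphMatrix (F : Type*) [Field F] {V : Type*} (G : SimpleGraph V)
    (A : Matrix V V F) : Prop :=
  A.IsSymm ∧ ∀ i j : V, i ≠ j → (A i j ≠ 0 ↔ G.Adj i j)

/-- The minimum rank `mr(F, G)` of the graph `G` over the field `F`. -/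
noncomputable def minRank (F : Type*) [Field F] {V : Type*} [Fintype V]
    (G : SimpleGraph V) : ℕ :=
  sInf {r : ℕ | ∃ A : Matrix V V F, IsGraphMatrix F G A ∧ A.rank = r}

/-- The full house graph: vertices `{0, 1, 2, 3, 4}` with edges
`01, 02, 12, 13, 14, 23, 24, 34` (the graph `12, 13, 23, 24, 25, 34, 35, 45`
on `{1, …, 5}` in 1-indexed notation). -/
def fullHouse : SimpleGraph (Fin 5) :=
  SimpleGraph.fromEdgeSet {s(0,1), s(0,2), s(1,2), s(1,3), s(1,4), s(2,3), s(2,4), s(3,4)}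

theorem two_le_rank_of_isGraphMatrix_fullHouse {F : Type*} [Field F]
    {A : Matrix (Fin 5) (Fin 5) F} (hA : IsGraphMatrix F fullHouse A) : 2 ≤ A.rank := by
  have h01 : A 0 1 ≠ 0 := (hA.2 0 1 (by decide)).2 (by simp [fullHouse])
  have h43 : A 4 3 ≠ 0 := (hA.2 4 3 (by decide)).2 (by simp [fullHouse])
  have h03 : A 0 3 = 0 := by
    by_contra h
    have := (hA.2 0 3 (by decide)).1 h
    simp [fullHouse] at this
  have hdet : IsUnit (A.submatrix ![0, 4] ![1, 3]) := by
    rw [Matrix.isUnit_iff_isUnit_det, Matrix.det_fin_two]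
    simp [h01, h43, h03]
  calc 2 = (A.submatrix ![0, 4] ![1, 3]).rank := by
        rw [Matrix.rank_of_isUnit _ hdet, Fintype.card_fin]
    _ ≤ A.rank := Matrix.rank_submatrix_le _ _ _

theorem exists_isGraphMatrix_fullHouse_rank_le_two {F : Type*} [Field F] {a : F}
    (h0 : a ≠ 0) (h1 : a ≠ 1) :
    ∃ A : Matrix (Fin 5) (Fin 5) F, IsGraphMatrix F fullHouse A ∧ A.rank ≤ 2 := by
  have h1' : 1 + -a ≠ 0 := by
    rw [← sub_eq_add_neg]
    exact sub_ne_zero.2 h1.symm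
  let U : Matrix (Fin 5) (Fin 2) F := !![1, 0; 1, 1; 1, 1; 0, 1; 0, 1]
  refine ⟨U * (Matrix.diagonal ![1, -a] * Uᵀ), ⟨?_, ?_⟩, ?_⟩
  · simp [Matrix.IsSymm, Matrix.transpose_mul, Matrix.mul_assoc]
  · intro i j hij
    fin_cases i <;> fin_cases j <;>
      simp [U, fullHouse, Matrix.mul_apply, Fin.sum_univ_two, h0, h1'] at hij ⊢
  · exact (Matrix.rank_mul_le_left _ _).trans (Matrix.rank_le_width _)

/-- If `F` is a field other than `F₂` (i.e. `F` has more than two elements), then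
the minimum rank of the full house graph over `F` is `2`. -/
theorem minRank_fullHouse_of_ne_F2 (F : Type*) [Field F] (hF : ∃ a : F, a ≠ 0 ∧ a ≠ 1) :
    minRank F fullHouse = 2 := by
  obtain ⟨a, h0, h1⟩ := hF
  obtain ⟨A, hA, hr⟩ := exists_isGraphMatrix_fullHouse_rank_le_two h0 h1
  have hle : minRank F fullHouse ≤ A.rank := Nat.sInf_le ⟨A, hA, rfl⟩
  refine le_antisymm (hle.trans hr) (le_csInf ⟨_, A, hA, rfl⟩ ?_)
  rintro r ⟨B, hB, rfl⟩
  exact two_le_rank_of_isGraphMatrix_fullHouse hB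
end

section
/- mr(F₂, full house) = 3, where F₂ is the field with two elements and the full house is the graph on vertex set {1,2,3,4,5} with edge set {12, 13, 23, 24, 25, 34, 35, 45}. -/
/-!
Upper bound: writing `J_S` for the all-ones matrix on the index set `S`, the matrix
`J_{0,1,2} + J_{1,2,3,4} + J_{1,2}` over `F₂` has the full house pattern, and it is a sum of
three matrices of rank one.

Lower bound: let `A` have the full house pattern, with diagonal `a, b, c, d, e`. Off-diagonal
entries of `A` are determined, since `1` is the only nonzero element of `F₂`. The minor on rows
`0, 1, 3` is `1 - d` for columns `1, 3, 4`, is `d (1 - b)` for columns `1, 2, 3`, and is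
`a (b d - 1) - d` for columns `0, 1, 3`. These cannot vanish together: the first two force
`d = b = 1`, and then the third is `-1`. Hence `A` has a nonzero minor of order three.
-/

open Matrix

/-- A nonzero minor of order `k` bounds the rank below by `k`. -/
lemma le_rank_of_minor_ne_zero {F : Type*} [Field F] {n k : ℕ}
    (A : Matrix (Fin n) (Fin n) F) (r s : Fin k → Fin n)
    (h : (A.submatrix r s).det ≠ 0) : k ≤ A.rank := by
  have hu : IsUnit (A.submatrix r s) :=
    (Matrix.isUnit_iff_isUnit_det _).2 (isUnit_iff_ne_zero.2 h)
  have hk : (A.submatrix r s).rank = k := by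
    simpa using Matrix.rank_of_isUnit _ hu
  exact hk ▸ Matrix.rank_submatrix_le A r s

lemma three_le_rank_of_fullHouse (A : Matrix (Fin 5) (Fin 5) (ZMod 2))
    (hA : IsGraphMatrix (ZMod 2) fullHouse A) : 3 ≤ A.rank := by
  obtain ⟨-, h⟩ := hA
  have one_of : ∀ x : ZMod 2, x ≠ 0 → x = 1 := by decide
  have edge : ∀ i j, fullHouse.Adj i j → A i j = 1 := fun i j hij =>
    one_of _ ((h i j hij.ne).2 hij)
  have nonedge : ∀ i j, i ≠ j → ¬ fullHouse.Adj i j → A i j = 0 := fun i j hij hn =>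
    not_not.1 fun h0 => hn ((h i j hij).1 h0)
  have h01 : A 0 1 = 1 := edge 0 1 (by simp [fullHouse])
  have h02 : A 0 2 = 1 := edge 0 2 (by simp [fullHouse])
  have h03 : A 0 3 = 0 := nonedge 0 3 (by decide) (by simp [fullHouse])
  have h04 : A 0 4 = 0 := nonedge 0 4 (by decide) (by simp [fullHouse])
  have h10 : A 1 0 = 1 := edge 1 0 (by simp [fullHouse])
  have h12 : A 1 2 = 1 := edge 1 2 (by simp [fullHouse])
  have h13 : A 1 3 = 1 := edge 1 3 (by simp [fullHouse])
  have h14 : A 1 4 = 1 := edge 1 4 (by simp [fullHouse])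
  have h30 : A 3 0 = 0 := nonedge 3 0 (by decide) (by simp [fullHouse])
  have h31 : A 3 1 = 1 := edge 3 1 (by simp [fullHouse])
  have h32 : A 3 2 = 1 := edge 3 2 (by simp [fullHouse])
  have h34 : A 3 4 = 1 := edge 3 4 (by simp [fullHouse])
  by_cases hd : A 3 3 = 0
  · apply le_rank_of_minor_ne_zero A ![0, 1, 3] ![1, 3, 4]
    rw [Matrix.det_fin_three]
    simp [*]
  have hd1 := one_of _ hd
  by_cases hb : A 1 1 = 0
  · apply le_rank_of_minor_ne_zero A ![0, 1, 3] ![1, 2, 3]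
    rw [Matrix.det_fin_three]
    simp [*]
  have hb1 := one_of _ hb
  apply le_rank_of_minor_ne_zero A ![0, 1, 3] ![0, 1, 3]
  rw [Matrix.det_fin_three]
  simp [h01, h03, h10, h13, h30, h31, hd1, hb1]

/-- The columns are the indicator vectors of `{0,1,2}`, `{1,2,3,4}` and `{1,2}`. -/
def fullHouseFactor : Matrix (Fin 5) (Fin 3) (ZMod 2) :=
  !![1, 0, 0; 1, 1, 1; 1, 1, 1; 0, 1, 0; 0, 1, 0]

lemma isGraphMatrix_fullHouseFactor :
    IsGraphMatrix (ZMod 2) fullHouse (fullHouseFactor * fullHouseFactor.transpose) := by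
  refine ⟨by simp [Matrix.IsSymm], ?_⟩
  have hadj : ∀ i j, fullHouse.Adj i j ↔
      s(i, j) ∈ ({s(0,1), s(0,2), s(1,2), s(1,3), s(1,4), s(2,3), s(2,4), s(3,4)} :
        Finset (Sym2 (Fin 5))) ∧ i ≠ j := fun i j => by
    simp [fullHouse]
  simp only [hadj]
  decide

/-- The minimum rank of the full house graph over the field `F₂` of two elements is `3`. -/
theorem minRank_fullHouse_F2 : minRank (ZMod 2) fullHouse = 3 := by
  have hmem := isGraphMatrix_fullHouseFactor
  have hle : (fullHouseFactor * fullHouseFactor.transpose).rank ≤ 3 :=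
    (Matrix.rank_mul_le_left _ _).trans (by simpa using Matrix.rank_le_width fullHouseFactor)
  unfold minRank
  apply le_antisymm
  · refine le_trans (Nat.sInf_le ?_) hle
    exact ⟨_, hmem, rfl⟩
  · refine le_csInf ?_ ?_
    · exact ⟨_, _, hmem, rfl⟩
    rintro r ⟨A, hA, rfl⟩
    exact three_le_rank_of_fullHouse A hA
end

section
/- Let F be a field and k a positive integer. Every graph G in F_{k+1}(F) contains an induced subgraph H belonging to F_k(F) such that G ∈ F_{k+1}(F,H). Equivalently, F_{k+1}(F) ⊆ ⋃_{H ∈ F_k(F)} F_{k+1}(F,H). -/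
/-!
Among all vertex sets `W` with `mr(F, G[W]) ≥ k` choose an inclusion-minimal one; the full vertex
set is a candidate, since `mr(F, G) ≥ k + 1`. By minimality every `G[W] - v = G[W \ {v}]` has
minimum rank less than `k`, so `G[W]` lies in `F_k(F)`. The graph `G` lies in `F_{k+1}(F, H)` for
every induced subgraph `H`, because `mr(F, G - v) ≤ k` holds for all `v`. The identifications of
induced subgraphs rest on the invariance of minimum rank under isomorphism, `minRank_congr`.
-/

open Matrix

/-- The graph `G - v` obtained from `G` by deleting the vertex `v`. -/
def deleteVert {V : Type*} (G : SimpleGraph V) (v : V) : SimpleGraph {u : V // u ≠ v} :=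
  SimpleGraph.comap Subtype.val G

/-- The induced subgraph of `G` on a finite set `W` of vertices. -/
def inducedSub {V : Type*} (G : SimpleGraph V) (W : Finset V) :
    SimpleGraph {x : V // x ∈ W} :=
  SimpleGraph.comap Subtype.val G

/-- `G ∈ F_K(F)`: `G` is a minimal forbidden subgraph for the class of graphs
with minimum rank at most `K - 1` over `F`, i.e. `mr(F, G) ≥ K` and
`mr(F, G - v) ≤ K - 1` for every vertex `v`. -/
def MemForbClass (F : Type*) [Field F] (K : ℕ) {V : Type*} [Fintype V] [DecidableEq V]
    (G : SimpleGraph V) : Prop :=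
  K ≤ minRank F G ∧ ∀ v : V, minRank F (deleteVert G v) + 1 ≤ K

/-- `G ∈ F_K(F, H)`: `G` contains `H` as an induced subgraph, `mr(F, G) ≥ K`, and for
some induced copy of `H` in `G` (an embedding `f : H ↪g G`), `mr(F, G - v) ≤ K - 1`
for every vertex `v` of `G` outside that copy. -/
def MemForbRel (F : Type*) [Field F] (K : ℕ) {VH VG : Type*} [Fintype VH] [Fintype VG]
    [DecidableEq VG] (H : SimpleGraph VH) (G : SimpleGraph VG) : Prop :=
  K ≤ minRank F G ∧
    ∃ f : H ↪g G, ∀ v : VG, v ∉ Set.range f → minRank F (deleteVert G v) + 1 ≤ K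

lemma minRank_le_of_iso (F : Type*) [Field F] {V W : Type*} [Fintype V] [Fintype W]
    {G : SimpleGraph V} {H : SimpleGraph W} (e : G ≃g H) : minRank F G ≤ minRank F H := by
  classical
  -- The adjacency matrix shows that the infimum is over a nonempty set, hence attained.
  have hne : {r : ℕ | ∃ A : Matrix W W F, IsGraphMatrix F H A ∧ A.rank = r}.Nonempty :=
    ⟨_, H.adjMatrix F,
      ⟨H.isSymm_adjMatrix, fun i j _ => by simp [SimpleGraph.adjMatrix_apply]⟩, rfl⟩
  obtain ⟨A, ⟨hs, hA⟩, hr⟩ := Nat.sInf_mem hne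
  refine Nat.sInf_le ⟨A.submatrix e.toEquiv e.toEquiv, ⟨hs.submatrix _, fun i j hij => ?_⟩, ?_⟩
  · exact (hA (e i) (e j) (e.injective.ne hij)).trans e.map_adj_iff
  · rw [Matrix.rank_submatrix]
    exact hr

lemma minRank_congr (F : Type*) [Field F] {V W : Type*} [Fintype V] [Fintype W]
    {G : SimpleGraph V} {H : SimpleGraph W} (e : G ≃g H) : minRank F G = minRank F H :=
  le_antisymm (minRank_le_of_iso F e) (minRank_le_of_iso F e.symm)

/-- The induced subgraph on all vertices is the graph itself. -/
def inducedSubUnivIso {V : Type*} [Fintype V] (G : SimpleGraph V) :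
    inducedSub G Finset.univ ≃g G where
  toEquiv := Equiv.subtypeUnivEquiv Finset.mem_univ
  map_rel_iff' := Iff.rfl

/-- Deleting `v` from `G[W]` gives `G[W \ {v}]`. -/
def deleteVertInducedSubIso {V : Type*} [DecidableEq V] (G : SimpleGraph V) (W : Finset V)
    (v : {x : V // x ∈ W}) :
    deleteVert (inducedSub G W) v ≃g inducedSub G (W.erase v) where
  toFun x := ⟨x.1.1, Finset.mem_erase.2 ⟨fun h => x.2 (Subtype.ext h), x.1.2⟩⟩
  invFun x := ⟨⟨x.1, Finset.mem_of_mem_erase x.2⟩,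
    fun h => Finset.ne_of_mem_erase x.2 (congrArg Subtype.val h)⟩
  left_inv _ := rfl
  right_inv _ := rfl
  map_rel_iff' := Iff.rfl

/-- Every graph `G` in `F_{k+1}(F)` contains an induced subgraph `H` belonging to
`F_k(F)` such that `G ∈ F_{k+1}(F, H)`. -/
theorem forbClass_subset_iUnion_forbRel (F : Type*) [Field F] (k : ℕ) (hk : 0 < k)
    {V : Type*} [Fintype V] [DecidableEq V] (G : SimpleGraph V)
    (hG : MemForbClass F (k + 1) G) :
    ∃ W : Finset V,
      MemForbClass F k (inducedSub G W) ∧ MemForbRel F (k + 1) (inducedSub G W) G := by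
  obtain ⟨hr, hd⟩ := hG
  have huniv : k ≤ minRank F (inducedSub G Finset.univ) := by
    rw [minRank_congr F (inducedSubUnivIso G)]
    omega
  obtain ⟨W, hW, hmin⟩ := WellFounded.has_min (wellFounded_lt (α := Finset V))
    {W : Finset V | k ≤ minRank F (inducedSub G W)} ⟨_, huniv⟩
  refine ⟨W, ⟨hW, fun v => ?_⟩, hr, ⟨⟨⟨Subtype.val, Subtype.val_injective⟩, Iff.rfl⟩,
    fun v _ => hd v⟩⟩
  rw [minRank_congr F (deleteVertInducedSubIso G W v)]
  by_contra hlt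
  refine hmin (W.erase v) ?_ (Finset.erase_ssubset v.2)
  change k ≤ minRank F (inducedSub G (W.erase v))
  omega
end

section
/- Let H be an induced subgraph of a graph G with mr(F₂,H) = k, and suppose G ∈ F_{k+1}(F₂,H). If |V(G)| − |V(H)| ≥ 2, then for every vertex v of G−H there exists M ∈ MR(F₂,H) with respect to which v is rank-preserving. If |V(G)| − |V(H)| ≥ 3, then for every pair of distinct vertices u,v of G−H there exists M ∈ MR(F₂,H) with respect to which the edge uv is rank-preserving. -/
/-!
The minimality of `G` yields the required matrices by restriction. Delete a vertex `z` outside `W`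
that is not among the given ones, and let `A` be a matrix of minimum rank for `G - z`, so
`rank A ≤ k`. Its principal submatrix `M` on `W` is a matrix of `H = G[W]`, hence
`k ≤ rank M ≤ rank A ≤ k`, and `M ∈ MR(F₂, H)`. Both `[M | wt(v)]` and the bordered matrix of an
edge `uv` avoiding `z` are submatrices of `A` that contain `M`, so their rank is squeezed between
`rank M` and `rank A`. Over `F₂` a nonzero entry is `1`, which identifies the entries of `A` with
the weights.
-/

open Matrix

/-- `MR(F, G)`: the set of matrices in `S(F, G)` attaining the minimum rank of `G`. -/
noncomputable def MRSet (F : Type*) [Field F] {V : Type*} [Fintype V] (G : SimpleGraph V) :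
    Set (Matrix V V F) :=
  {A | IsGraphMatrix F G A ∧ A.rank = minRank F G}

/-- The weight vector of a vertex `v` with respect to the induced subgraph on `W`:
its entry at `i ∈ W` is `1` iff `v` is adjacent to `i` in `G`. -/
def wtVec {V : Type*} (G : SimpleGraph V) [DecidableRel G.Adj] (W : Finset V) (v : V) :
    {x : V // x ∈ W} → ZMod 2 :=
  fun i => if G.Adj v ↑i then 1 else 0

/-- The matrix `[M | w]`: `M` augmented by the extra column `w`. -/
def augmentCol {F : Type*} {n : Type*} (M : Matrix n n F) (w : n → F) :
    Matrix n (n ⊕ Unit) F :=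
  Matrix.of fun i => Sum.elim (fun j => M i j) (fun _ => w i)

/-- The bordered matrix `[[M, u], [vᵀ, c]]`. -/
def borderMat {F : Type*} {n : Type*} (M : Matrix n n F) (u v : n → F) (c : F) :
    Matrix (n ⊕ Unit) (n ⊕ Unit) F :=
  Matrix.of (Sum.elim (fun i => Sum.elim (fun j => M i j) (fun _ => u i))
                      (fun _ => Sum.elim (fun j => v j) (fun _ => c)))

/-- The minimum rank is attained; the adjacency matrix shows that `S(F, G)` is nonempty. -/
lemma exists_isGraphMatrix_rank_eq_minRank {F : Type*} [Field F] {V : Type*} [Fintype V]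
    (G : SimpleGraph V) : ∃ A : Matrix V V F, IsGraphMatrix F G A ∧ A.rank = minRank F G := by
  classical
  refine Nat.sInf_mem (s := {r : ℕ | ∃ A : Matrix V V F, IsGraphMatrix F G A ∧ A.rank = r})
    ⟨_, G.adjMatrix F, ⟨G.isSymm_adjMatrix, fun i j _ => ?_⟩, rfl⟩
  simp [SimpleGraph.adjMatrix_apply]

lemma minRank_le_rank {F : Type*} [Field F] {V : Type*} [Fintype V] {G : SimpleGraph V}
    {A : Matrix V V F} (hA : IsGraphMatrix F G A) : minRank F G ≤ A.rank :=
  Nat.sInf_le ⟨A, hA, rfl⟩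

lemma IsGraphMatrix.apply_deleteVert {V : Type*} {G : SimpleGraph V} [DecidableRel G.Adj] {z : V}
    {A : Matrix {u : V // u ≠ z} {u : V // u ≠ z} (ZMod 2)}
    (hA : IsGraphMatrix (ZMod 2) (deleteVert G z) A) (i j : {u : V // u ≠ z}) (hij : i.1 ≠ j.1) :
    A i j = if G.Adj i.1 j.1 then 1 else 0 := by
  have h01 : ∀ x : ZMod 2, x ≠ 0 → x = 1 := by decide
  have hij' : i ≠ j := fun h => hij (congrArg Subtype.val h)
  split_ifs with h
  · exact h01 _ ((hA.2 i j hij').2 h)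
  · by_contra h0
    exact h ((hA.2 i j hij').1 h0)

/-- Transposed form of `IsGraphMatrix.apply_deleteVert`, matching weights whose vertex indexes the
column. -/
lemma IsGraphMatrix.apply_deleteVert_swap {V : Type*} {G : SimpleGraph V} [DecidableRel G.Adj]
    {z : V} {A : Matrix {u : V // u ≠ z} {u : V // u ≠ z} (ZMod 2)}
    (hA : IsGraphMatrix (ZMod 2) (deleteVert G z) A) (i j : {u : V // u ≠ z}) (hij : i.1 ≠ j.1) :
    A i j = if G.Adj j.1 i.1 then 1 else 0 := by
  rw [← hA.1.apply, hA.apply_deleteVert j i hij.symm]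

/-- Inclusion of `W` into the vertex set of `G - z`, for `z ∉ W`. -/
def inclDelete {V : Type*} {W : Finset V} {z : V} (hz : z ∉ W) (x : {x : V // x ∈ W}) :
    {u : V // u ≠ z} :=
  ⟨x, fun h => hz (h ▸ x.2)⟩

lemma IsGraphMatrix.submatrix_inclDelete {F : Type*} [Field F] {V : Type*} {G : SimpleGraph V}
    {W : Finset V} {z : V} (hz : z ∉ W) {A : Matrix {u : V // u ≠ z} {u : V // u ≠ z} F}
    (hA : IsGraphMatrix F (deleteVert G z) A) :
    IsGraphMatrix F (inducedSub G W) (A.submatrix (inclDelete hz) (inclDelete hz)) := by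
  refine ⟨hA.1.submatrix _, fun i j hij => hA.2 _ _ fun h => hij ?_⟩
  exact Subtype.ext (congrArg (Subtype.val : {u : V // u ≠ z} → V) h)

/-- A minimum-rank matrix of `G - z` restricts to a minimum-rank matrix of `G[W]`, without loss
of rank. -/
lemma exists_matrix_deleteVert {V : Type*} [Fintype V] [DecidableEq V] (G : SimpleGraph V)
    {W : Finset V} {z : V} (hz : z ∉ W)
    (hle : minRank (ZMod 2) (deleteVert G z) ≤ minRank (ZMod 2) (inducedSub G W)) :
    ∃ A : Matrix {u : V // u ≠ z} {u : V // u ≠ z} (ZMod 2),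
      IsGraphMatrix (ZMod 2) (deleteVert G z) A ∧
      A.submatrix (inclDelete hz) (inclDelete hz) ∈ MRSet (ZMod 2) (inducedSub G W) ∧
      A.rank ≤ (A.submatrix (inclDelete hz) (inclDelete hz)).rank := by
  obtain ⟨A, hA, hr⟩ := exists_isGraphMatrix_rank_eq_minRank (F := ZMod 2) (deleteVert G z)
  have hM := hA.submatrix_inclDelete (W := W) hz
  have h1 := minRank_le_rank hM
  have h2 := A.rank_submatrix_le (inclDelete hz) (inclDelete hz)
  exact ⟨A, hA, ⟨hM, by omega⟩, by omega⟩

/-- Let `H = G[W]` be an induced subgraph of `G` with `mr(F₂, H) = k`, and suppose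
`G ∈ F_{k+1}(F₂, H)` (witnessed by this copy of `H`).  If `|V(G)| - |V(H)| ≥ 2`, then
every vertex of `G - H` is rank-preserving with respect to some `M ∈ MR(F₂, H)`; if
`|V(G)| - |V(H)| ≥ 3`, then every edge (pair of distinct vertices) of `G - H` is
rank-preserving with respect to some `M ∈ MR(F₂, H)`. -/
theorem exists_rank_preserving {V : Type*} [Fintype V] [DecidableEq V]
    (G : SimpleGraph V) [DecidableRel G.Adj] (W : Finset V) (k : ℕ)
    (hH : minRank (ZMod 2) (inducedSub G W) = k)
    (hG : k + 1 ≤ minRank (ZMod 2) G)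
    (hdel : ∀ v : V, v ∉ W → minRank (ZMod 2) (deleteVert G v) ≤ k) :
    (2 ≤ Wᶜ.card → ∀ v : V, v ∉ W →
      ∃ M ∈ MRSet (ZMod 2) (inducedSub G W),
        (augmentCol M (wtVec G W v)).rank = M.rank) ∧
    (3 ≤ Wᶜ.card → ∀ u v : V, u ∉ W → v ∉ W → u ≠ v →
      ∃ M ∈ MRSet (ZMod 2) (inducedSub G W),
        (borderMat M (wtVec G W u) (wtVec G W v)
          (if G.Adj u v then 1 else 0)).rank = M.rank) := by
  subst hH
  constructor
  · intro hc v hv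
    obtain ⟨z, hzW, hzv⟩ := Finset.exists_mem_notMem_of_card_lt_card
      (s := {v}) (t := Wᶜ) (by rw [Finset.card_singleton]; omega)
    have hz : z ∉ W := by simpa using hzW
    have hvz : v ≠ z := fun h => hzv (by simp [h])
    obtain ⟨A, hA, hM, hr⟩ := exists_matrix_deleteVert G hz (hdel z hz)
    refine ⟨_, hM, le_antisymm (le_trans ?_ hr) ?_⟩
    · have : augmentCol (A.submatrix (inclDelete hz) (inclDelete hz)) (wtVec G W v) =
          A.submatrix (inclDelete hz) (Sum.elim (inclDelete hz) fun _ => ⟨v, hvz⟩) := by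
        ext i (j | j)
        · rfl
        · have hi : i.1 ≠ v := fun h => hv (h ▸ i.2)
          exact (hA.apply_deleteVert_swap (inclDelete hz i) ⟨v, hvz⟩ hi).symm
      rw [this]
      exact A.rank_submatrix_le _ _
    · exact (augmentCol (A.submatrix (inclDelete hz) (inclDelete hz))
        (wtVec G W v)).rank_submatrix_le id Sum.inl
  · intro hc u v hu hv huv
    obtain ⟨z, hzW, hzuv⟩ := Finset.exists_mem_notMem_of_card_lt_card
      (s := {u, v}) (t := Wᶜ) (by rw [Finset.card_pair huv]; omega)
    have hz : z ∉ W := by simpa using hzW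
    have huz : u ≠ z := fun h => hzuv (by simp [h])
    have hvz : v ≠ z := fun h => hzuv (by simp [h])
    obtain ⟨A, hA, hM, hr⟩ := exists_matrix_deleteVert G hz (hdel z hz)
    refine ⟨_, hM, le_antisymm (le_trans ?_ hr) ?_⟩
    -- The extra column of the bordered matrix is that of `u`, the extra row that of `v`.
    · have : borderMat (A.submatrix (inclDelete hz) (inclDelete hz)) (wtVec G W u)
            (wtVec G W v) (if G.Adj u v then 1 else 0) =
          A.submatrix (Sum.elim (inclDelete hz) fun _ => ⟨v, hvz⟩)
            (Sum.elim (inclDelete hz) fun _ => ⟨u, huz⟩) := by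
        ext (i | i) (j | j)
        · rfl
        · have hi : i.1 ≠ u := fun h => hu (h ▸ i.2)
          exact (hA.apply_deleteVert_swap (inclDelete hz i) ⟨u, huz⟩ hi).symm
        · have hj : v ≠ j.1 := fun h => hv (h ▸ j.2)
          exact (hA.apply_deleteVert ⟨v, hvz⟩ (inclDelete hz j) hj).symm
        · exact (hA.apply_deleteVert_swap ⟨v, hvz⟩ ⟨u, huz⟩ huv.symm).symm
      rw [this]
      exact A.rank_submatrix_le _ _
    · exact (borderMat (A.submatrix (inclDelete hz) (inclDelete hz)) (wtVec G W u)
        (wtVec G W v) (if G.Adj u v then 1 else 0)).rank_submatrix_le Sum.inl Sum.inl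
end

section
/- Let H be an induced subgraph of a graph G with mr(F₂,H) = k, and suppose that MR(F₂,H) contains exactly one matrix. If G ∈ F_{k+1}(F₂,H), then |V(G)| − |V(H)| ≤ 2. -/
/-!
Suppose at least three vertices lie outside `W`, and let `M` be the unique matrix in
`MR(F₂, H)`.  For `v ∉ W`, a minimum rank matrix `A_v` of `G - v` has rank at most `k`, so its
principal submatrix on `W`, being in `S(F₂, H)` and of rank at most `k`, is `M`.  As the rank of
`A_v` equals that of this submatrix, the columns of `A_v` indexed by `W` span its column space
(`exists_column_combination`).  Over `F₂` the off-diagonal entries of `A_v` are dictated by `G`,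
so the restriction `b u` to `W` of the column of a vertex `u` does not depend on `v`; it has the
form `M y_u`, and then `A_v i j = y_iᵀ M y_j` for any choice of the `y_u`.

Hence the matrix with entries `y_iᵀ M y_j` has rank at most `k`.  Since the complement of `W` has
at least three vertices, any two vertices `i ≠ j` of `G` both survive in some `G - v` with `v ∉ W`, so its
off-diagonal entries have the pattern of `G`, contradicting `mr(F₂, G) ≥ k + 1`.
-/

open Matrix

/-- The infimum defining `minRank` is attained. -/
lemma exists_isGraphMatrix_rank_eq (F : Type*) [Field F] {V : Type*} [Fintype V]
    (G : SimpleGraph V) : ∃ A : Matrix V V F, IsGraphMatrix F G A ∧ A.rank = minRank F G := by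
  classical
  have hne : {r : ℕ | ∃ A : Matrix V V F, IsGraphMatrix F G A ∧ A.rank = r}.Nonempty := by
    refine ⟨_, G.adjMatrix F, ⟨G.isSymm_adjMatrix, fun i j _ => ?_⟩, rfl⟩
    simp [SimpleGraph.adjMatrix_apply]
  exact Nat.sInf_mem hne

/-- If a principal submatrix has the full rank of `A`, its columns in `A` span the column space. -/
lemma exists_column_combination {F m n : Type*} [Field F] [Fintype m] [Fintype n]
    (A : Matrix n n F) (e : m → n) (h : A.rank ≤ (A.submatrix e e).rank) (j : n) :
    ∃ z : m → F, ∀ i, A i j = ∑ w, A i (e w) * z w := by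
  classical
  have h1 : (A.submatrix e e).rank ≤ (A.submatrix id e).rank :=
    rank_submatrix_le (A.submatrix id e) e id
  have hle : LinearMap.range (A.submatrix id e).mulVecLin ≤ LinearMap.range A.mulVecLin := by
    rw [range_mulVecLin, range_mulVecLin]
    apply Submodule.span_mono
    rintro _ ⟨w, rfl⟩
    exact ⟨e w, rfl⟩
  have heq := Submodule.eq_of_le_of_finrank_le hle (h.trans h1)
  have hj : A.mulVecLin (Pi.single j 1) ∈ LinearMap.range (A.submatrix id e).mulVecLin := by
    rw [heq]
    exact ⟨_, rfl⟩
  obtain ⟨z, hz⟩ := hj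
  refine ⟨z, fun i => ?_⟩
  have := congrFun hz i
  simp only [mulVecLin_apply, mulVec_single_one, col_apply] at this
  rw [← this]
  rfl

/-- Over `F₂` the off-diagonal entries of a matrix with the pattern of `G` are determined by `G`. -/
lemma IsGraphMatrix.apply_eq_ite {V : Type*} {G : SimpleGraph V} [DecidableRel G.Adj]
    {A : Matrix V V (ZMod 2)} (hA : IsGraphMatrix (ZMod 2) G A) {i j : V} (hij : i ≠ j) :
    A i j = if G.Adj i j then 1 else 0 := by
  have h := hA.2 i j hij
  have h2 : ∀ x : ZMod 2, x ≠ 0 → x = 1 := by decide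
  split_ifs with hadj
  · exact h2 _ (h.2 hadj)
  · by_contra hne
    exact hadj (h.1 hne)

/-- Let `H = G[W]` be an induced subgraph of `G` with `mr(F₂, H) = k`, and suppose that
`MR(F₂, H)` contains exactly one matrix.  If `G ∈ F_{k+1}(F₂, H)` (witnessed by this copy
of `H`), then `|V(G)| - |V(H)| ≤ 2`. -/
theorem card_le_two_of_unique_MR {V : Type*} [Fintype V] [DecidableEq V]
    (G : SimpleGraph V) (W : Finset V) (k : ℕ)
    (hH : minRank (ZMod 2) (inducedSub G W) = k)
    (hMR : ∃! M, M ∈ MRSet (ZMod 2) (inducedSub G W))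
    (hG : k + 1 ≤ minRank (ZMod 2) G)
    (hdel : ∀ v : V, v ∉ W → minRank (ZMod 2) (deleteVert G v) ≤ k) :
    Wᶜ.card ≤ 2 := by
  classical
  by_contra hcard
  have havoid : ∀ i j : V, ∃ v, v ∉ W ∧ i ≠ v ∧ j ≠ v := by
    intro i j
    obtain ⟨v, hv, hvn⟩ := Finset.exists_mem_notMem_of_card_lt_card
      (s := {i, j}) (t := Wᶜ) (lt_of_le_of_lt Finset.card_le_two (by omega))
    simp only [Finset.mem_insert, Finset.mem_singleton, not_or] at hvn
    exact ⟨v, by simpa using hv, fun h => hvn.1 h.symm, fun h => hvn.2 h.symm⟩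
  obtain ⟨M, ⟨hMS, hMrank⟩, hMuniq⟩ := hMR
  rw [hH] at hMrank
  -- `b u` is the common restriction to `W` of the column of `u` in the matrices of `G - v`.
  let b : V → W → ZMod 2 := fun u w =>
    if h : u ∈ W then M w ⟨u, h⟩ else if G.Adj w u then 1 else 0
  -- Any solution of `M y = b i` may be used to compute the entries in the row of `i`.
  have key : ∀ v, v ∉ W → ∃ A : Matrix {u : V // u ≠ v} {u : V // u ≠ v} (ZMod 2),
      IsGraphMatrix (ZMod 2) (deleteVert G v) A ∧ ∀ j : {u : V // u ≠ v}, ∃ z : W → ZMod 2, M *ᵥ z = b j ∧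
        ∀ (i : {u : V // u ≠ v}) (y : W → ZMod 2), M *ᵥ y = b i → A i j = y ⬝ᵥ b j := by
    intro v hv
    obtain ⟨A, hA, hArank⟩ := exists_isGraphMatrix_rank_eq (ZMod 2) (deleteVert G v)
    let e : W → {u : V // u ≠ v} := fun w => ⟨w, fun h => hv (h ▸ w.2)⟩
    have he : ∀ w w', w ≠ w' → e w ≠ e w' := fun w w' h h' =>
      h (Subtype.ext (congrArg (fun x : {u : V // u ≠ v} => (x : V)) h'))
    have hAk : A.rank ≤ k := hArank ▸ hdel v hv
    have hS : IsGraphMatrix (ZMod 2) (inducedSub G W) (A.submatrix e e) :=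
      ⟨hA.1.submatrix e, fun i j hij => hA.2 _ _ (he i j hij)⟩
    have hrank : (A.submatrix e e).rank = k :=
      le_antisymm ((rank_submatrix_le A e e).trans hAk) (hH ▸ minRank_le_rank hS)
    have hM : A.submatrix e e = M := hMuniq _ ⟨hS, by rw [hrank, hH]⟩
    have hb : ∀ (j : {u : V // u ≠ v}) (w : W), A (e w) j = b j w := by
      intro j w
      by_cases hj : (j : V) ∈ W
      · simp only [b, hj, dif_pos, ← hM]
        rfl
      · have hne : e w ≠ j := fun h => hj (h ▸ w.2)
        simp only [b, hj, dif_neg, not_false_eq_true]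
        rw [hA.apply_eq_ite hne]
        rfl
    refine ⟨A, hA, fun j => ?_⟩
    obtain ⟨z, hz⟩ := exists_column_combination A e (by rw [hrank]; exact hAk) j
    have hMz : M *ᵥ z = b j := by
      ext w
      rw [← hb, hz, ← hM]
      rfl
    refine ⟨z, hMz, fun i y hy => ?_⟩
    have h1 : A i j = b i ⬝ᵥ z := by
      rw [hz]
      refine Finset.sum_congr rfl fun w _ => ?_
      rw [← hb, hA.1.apply]
    rw [h1, ← hy, ← hMz, dotProduct_mulVec, ← mulVec_transpose, hMS.1]
  have hy : ∀ u, ∃ y : W → ZMod 2, M *ᵥ y = b u := by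
    intro u
    obtain ⟨v, hv, hu, -⟩ := havoid u u
    obtain ⟨A, -, h⟩ := key v hv
    obtain ⟨z, hz, -⟩ := h ⟨u, hu⟩
    exact ⟨z, hz⟩
  choose y hy using hy
  let Y : Matrix V W (ZMod 2) := of y
  have hB : IsGraphMatrix (ZMod 2) G (Y * (M * Yᵀ)) := by
    constructor
    · simp [Matrix.IsSymm, transpose_mul, hMS.1.eq, Matrix.mul_assoc]
    · intro i j hij
      obtain ⟨v, hv, hi, hj⟩ := havoid i j
      obtain ⟨A, hA, h⟩ := key v hv
      obtain ⟨z, -, hz⟩ := h ⟨j, hj⟩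
      have h2 : (Y * (M * Yᵀ)) i j = A ⟨i, hi⟩ ⟨j, hj⟩ := by
        rw [hz ⟨i, hi⟩ (y i) (hy i), ← hy j]
        rfl
      rw [h2]
      exact hA.2 _ _ (fun h' => hij (congrArg Subtype.val h'))
  have h3 : (Y * (M * Yᵀ)).rank ≤ k :=
    (rank_mul_le_right _ _).trans ((rank_mul_le_left _ _).trans hMrank.le)
  have := minRank_le_rank hB
  omega
end

section
/- If G ∈ F₄(F₂, dart), then |V(G)| ≤ 7. Here the dart is the graph on vertex set {1,2,3,4,5} with edge set {12, 23, 24, 25, 34, 45}. -/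
/-!
Over `F₂`, a rank-three matrix in `S(F₂, dart)` has diagonal `d₀ = 1`, `d₂ = 0`, and its principal
submatrix on the vertices `0, 2, 3` is invertible, with `b = d₃` as its only free entry. So a graph
matrix of rank at most three on a graph containing the dart is determined by `b` and by the
adjacencies to these three vertices: its `(x, y)` entry is the value `dartForm G f b x y` of a
bilinear form (`exists_dartForm_of_rank_le`). Conversely each such form gives a matrix of rank at
most three (`minRank_le_of_dartForm`). Call a pair `x ≠ y` bad for `b` if the form disagrees with
adjacency there. Then `mr ≤ 3` means that some `b ∈ {0, 1}` has no bad pair.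

Suppose `G` has at least eight vertices. For any `u, w` there is a vertex outside the dart and
different from `u, w`; deleting it shows that some `b` has no bad pair in `dart ∪ {u, w}`.
`exists_global_of_local` deduces that one `b` works everywhere, which contradicts `mr(G) ≥ 4`.
Its key point: if a single vertex `x` outside the dart is compatible with both values of `b`, then
comparing the two formulas at the pair `(x, 1)` shows that `x` is not adjacent to `2`, and the two
forms coincide on such vertices. Hence a bad pair of compatible vertices is bad for both values.
-/

open Matrix

/-- The dart: the graph on `{0, 1, 2, 3, 4}` with edges `01, 12, 13, 14, 23, 34`
(edges `12, 23, 24, 25, 34, 45` on `{1, …, 5}` in 1-indexed notation). -/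
def dart : SimpleGraph (Fin 5) :=
  SimpleGraph.fromEdgeSet {s(0,1), s(1,2), s(1,3), s(1,4), s(2,3), s(3,4)}

/-- A matrix of rank at most three has vanishing `4 × 4` minors. -/
lemma det_submatrix_eq_zero {V : Type*} [Fintype V] {A : Matrix V V (ZMod 2)}
    (hA : A.rank ≤ 3) (r c : Fin 4 → V) : (A.submatrix r c).det = 0 := by
  by_contra h
  have h1 : (A.submatrix r c).rank = 4 := by
    rw [Matrix.rank_of_isUnit]
    · simp
    · exact (Matrix.isUnit_iff_isUnit_det _).2 (isUnit_iff_ne_zero.2 h)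
  have h2 : (A.submatrix r c).rank ≤ A.rank := Matrix.rank_submatrix_le _ _ _
  omega

lemma det_fin_four_expand {R : Type*} [CommRing R] (M : Matrix (Fin 4) (Fin 4) R) :
    M.det =
      M 0 0 * (M 1 1 * M 2 2 * M 3 3 - M 1 1 * M 2 3 * M 3 2 - M 1 2 * M 2 1 * M 3 3
        + M 1 2 * M 2 3 * M 3 1 + M 1 3 * M 2 1 * M 3 2 - M 1 3 * M 2 2 * M 3 1)
      - M 0 1 * (M 1 0 * M 2 2 * M 3 3 - M 1 0 * M 2 3 * M 3 2 - M 1 2 * M 2 0 * M 3 3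
        + M 1 2 * M 2 3 * M 3 0 + M 1 3 * M 2 0 * M 3 2 - M 1 3 * M 2 2 * M 3 0)
      + M 0 2 * (M 1 0 * M 2 1 * M 3 3 - M 1 0 * M 2 3 * M 3 1 - M 1 1 * M 2 0 * M 3 3
        + M 1 1 * M 2 3 * M 3 0 + M 1 3 * M 2 0 * M 3 1 - M 1 3 * M 2 1 * M 3 0)
      - M 0 3 * (M 1 0 * M 2 1 * M 3 2 - M 1 0 * M 2 2 * M 3 1 - M 1 1 * M 2 0 * M 3 2
        + M 1 1 * M 2 2 * M 3 0 + M 1 2 * M 2 0 * M 3 1 - M 1 2 * M 2 1 * M 3 0) := by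
  rw [Matrix.det_succ_row_zero]
  simp [Fin.sum_univ_succ, Matrix.det_fin_three, Fin.succAbove]
  ring

open Classical in
/-- The adjacency indicator of `G`, with values in `F₂`. -/
noncomputable def adjInd {V : Type*} (G : SimpleGraph V) (x y : V) : ZMod 2 :=
  if G.Adj x y then 1 else 0

open Classical in
/-- For a dart `f` in `G`, the `(x, y)` entry forced on a graph matrix of rank three whose
principal submatrix on `f 0, f 2, f 3` is `!![1, 0, 0; 0, 0, 1; 0, 1, b]`, expressed through the
rows of that matrix at `x` and `y` restricted to those three columns. The two `if`s supply the
nonzero diagonal entries. -/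
noncomputable def dartForm {V : Type*} (G : SimpleGraph V) (f : dart ↪g G) (b : ZMod 2)
    (x y : V) : ZMod 2 :=
  let p := fun z => if z = f 0 then 1 else adjInd G z (f 0)
  let q := fun z => adjInd G z (f 2)
  let r := fun z => if z = f 3 then b else adjInd G z (f 3)
  p x * p y + b * q x * q y + q x * r y + r x * q y

lemma IsGraphMatrix.apply_eq {V : Type*} {G : SimpleGraph V} {A : Matrix V V (ZMod 2)}
    (hA : IsGraphMatrix (ZMod 2) G A) {x y : V} (h : x ≠ y) : A x y = adjInd G x y := by
  have h1 := hA.2 x y h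
  have key : ∀ a : ZMod 2, a ≠ 0 → a = 1 := by decide
  unfold adjInd
  split_ifs with h2
  · exact key _ (h1.2 h2)
  · by_contra h3
    exact h2 (h1.1 h3)

lemma adjInd_dart {V : Type*} {G : SimpleGraph V} (f : dart ↪g G) (i j : Fin 5) :
    adjInd G (f i) (f j) = adjInd dart i j := by
  have h : G.Adj (f i) (f j) ↔ dart.Adj i j := f.map_adj_iff
  by_cases hij : dart.Adj i j <;> simp [adjInd, h, hij]

/-- The graph matrices of rank at most three on a graph containing the dart are all given by
`dartForm`. -/
lemma exists_dartForm_of_rank_le {V : Type*} [Fintype V] (G : SimpleGraph V) (f : dart ↪g G)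
    {A : Matrix V V (ZMod 2)} (hA : IsGraphMatrix (ZMod 2) G A) (hr : A.rank ≤ 3) :
    ∃ b, ∀ x y, x ≠ y → adjInd G x y = dartForm G f b x y := by
  classical
  have hd : ∀ i j : Fin 5, i ≠ j → A (f i) (f j) = adjInd dart i j := fun i j hij => by
    rw [hA.apply_eq (f.injective.ne hij), adjInd_dart]
  have e01 : A (f 0) (f 1) = 1 := by
    simpa [adjInd, dart] using hd 0 1 (by decide)
  have e02 : A (f 0) (f 2) = 0 := by
    simpa [adjInd, dart] using hd 0 2 (by decide)
  have e03 : A (f 0) (f 3) = 0 := by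
    simpa [adjInd, dart] using hd 0 3 (by decide)
  have e04 : A (f 0) (f 4) = 0 := by
    simpa [adjInd, dart] using hd 0 4 (by decide)
  have e12 : A (f 1) (f 2) = 1 := by
    simpa [adjInd, dart] using hd 1 2 (by decide)
  have e13 : A (f 1) (f 3) = 1 := by
    simpa [adjInd, dart] using hd 1 3 (by decide)
  have e14 : A (f 1) (f 4) = 1 := by
    simpa [adjInd, dart] using hd 1 4 (by decide)
  have e23 : A (f 2) (f 3) = 1 := by
    simpa [adjInd, dart] using hd 2 3 (by decide)
  have e24 : A (f 2) (f 4) = 0 := by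
    simpa [adjInd, dart] using hd 2 4 (by decide)
  have e34 : A (f 3) (f 4) = 1 := by
    simpa [adjInd, dart] using hd 3 4 (by decide)
  have hs : ∀ x y, A x y = A y x := fun x y => hA.1.apply y x
  -- The minor has value `d₀ (d₁ + d₃) + 1`, so its vanishing forces `d₀ = 1`.
  have d0 : A (f 0) (f 0) = 1 := by
    have m := det_submatrix_eq_zero hr (f ∘ ![0, 1, 2, 3]) (f ∘ ![0, 1, 3, 4])
    rw [det_fin_four_expand] at m
    simp [hs (f 1) (f 0), hs (f 2) (f 0), hs (f 2) (f 1), hs (f 3) (f 0), hs (f 3) (f 1),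
      e01, e02, e03, e04, e12, e13, e14, e23, e24, e34] at m
    revert m
    generalize A (f 0) (f 0) = a
    generalize A (f 1) (f 1) = b
    generalize A (f 3) (f 3) = c
    revert a b c
    decide
  -- With `d₀ = 1`, two further minors force `d₂ = 0`.
  have d2 : A (f 2) (f 2) = 0 := by
    have m := det_submatrix_eq_zero hr (f ∘ ![0, 2, 3, 4]) (f ∘ ![0, 2, 3, 4])
    have m' := det_submatrix_eq_zero hr (f ∘ ![0, 2, 3, 4]) (f ∘ ![0, 1, 2, 4])
    rw [det_fin_four_expand] at m m'
    simp [hs (f 2) (f 0), hs (f 2) (f 1), hs (f 3) (f 0), hs (f 3) (f 1),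
      hs (f 3) (f 2), hs (f 4) (f 0), hs (f 4) (f 1), hs (f 4) (f 2), hs (f 4) (f 3),
      e01, e02, e03, e04, e12, e13, e14, e23, e24, e34, d0] at m m'
    revert m m'
    generalize A (f 2) (f 2) = a
    generalize A (f 3) (f 3) = b
    generalize A (f 4) (f 4) = c
    revert a b c
    decide
  refine ⟨A (f 3) (f 3), fun x y hxy => ?_⟩
  have hp : ∀ z, (if z = f 0 then 1 else adjInd G z (f 0)) = A z (f 0) := fun z => by
    split_ifs with h
    · rw [h, d0]
    · rw [hA.apply_eq h]
  have hq : ∀ z, adjInd G z (f 2) = A z (f 2) := fun z => by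
    by_cases h : z = f 2
    · rw [h, d2]; simp [adjInd]
    · rw [hA.apply_eq h]
  have hrr : ∀ z, (if z = f 3 then A (f 3) (f 3) else adjInd G z (f 3)) = A z (f 3) :=
    fun z => by
      split_ifs with h
      · rw [h]
      · rw [hA.apply_eq h]
  simp only [dartForm, hp, hq, hrr]
  rw [← hA.apply_eq hxy]
  -- The minor bordering the invertible principal `3 × 3` block by row `x` and column `y`.
  have m := det_submatrix_eq_zero hr ![f 0, f 2, f 3, x] ![f 0, f 2, f 3, y]
  rw [det_fin_four_expand] at m
  simp [hs (f 2) (f 0), hs (f 3) (f 0), hs (f 3) (f 2), hs (f 0) y, hs (f 2) y, hs (f 3) y,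
    e02, e03, e23, d0, d2] at m
  have h2 : (2 : ZMod 2) = 0 := by decide
  linear_combination m - (A x (f 2) * A y (f 3) + A x (f 3) * A y (f 2)) * h2

lemma adjInd_comm {V : Type*} (G : SimpleGraph V) (x y : V) : adjInd G x y = adjInd G y x := by
  by_cases h : G.Adj x y <;> simp [adjInd, h, G.adj_comm y x]

lemma minRank_le_of_dartForm {V : Type*} [Fintype V] (G : SimpleGraph V) (f : dart ↪g G)
    (b : ZMod 2) (h : ∀ x y, x ≠ y → adjInd G x y = dartForm G f b x y) :
    minRank (ZMod 2) G ≤ 3 := by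
  classical
  let P : Matrix V (Fin 3) (ZMod 2) := Matrix.of fun z => ![if z = f 0 then 1 else adjInd G z (f 0),
    adjInd G z (f 2), if z = f 3 then b else adjInd G z (f 3)]
  let C : Matrix (Fin 3) (Fin 3) (ZMod 2) := !![1, 0, 0; 0, b, 1; 0, 1, 0]
  have hM : ∀ x y, (P * (C * Pᵀ)) x y = dartForm G f b x y := fun x y => by
    simp only [Matrix.mul_apply, Fin.sum_univ_three, Matrix.transpose_apply]
    simp only [P, C, dartForm, Matrix.of_apply, Matrix.cons_val]
    ring
  refine le_trans (Nat.sInf_le ⟨P * (C * Pᵀ), ⟨?_, ?_⟩, rfl⟩) ?_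
  · ext x y
    rw [Matrix.transpose_apply, hM, hM]
    simp only [dartForm]
    ring
  · intro x y hxy
    rw [hM, ← h x y hxy]
    simp [adjInd]
  · exact (Matrix.rank_mul_le_left _ _).trans (by simpa using P.rank_le_card_width)

/-- If a vertex `x` outside the dart satisfies the formula at the pair `(x, f 1)` for both values
of the parameter, then it is not adjacent to `f 2`. -/
lemma adjInd_two_eq_zero {V : Type*} (G : SimpleGraph V) (f : dart ↪g G) {b c : ZMod 2}
    (hbc : b ≠ c) {x : V} (hx : x ∉ Set.range f)
    (h1 : adjInd G x (f 1) = dartForm G f b x (f 1))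
    (h2 : adjInd G x (f 1) = dartForm G f c x (f 1)) : adjInd G x (f 2) = 0 := by
  have hne : ∀ i, x ≠ f i := fun i h => hx ⟨i, h.symm⟩
  have e : adjInd G (f 1) (f 2) = 1 := by rw [adjInd_dart]; simp [adjInd, dart]
  rw [h1] at h2
  simp [dartForm, hne, f.injective.eq_iff, e] at h2
  exact h2.resolve_left hbc

/-- If on the union of the dart with any two further vertices some parameter has no bad pair, then
some parameter has no bad pair at all. -/
lemma exists_global_of_local {V : Type*} (G : SimpleGraph V) (f : dart ↪g G)
    (K : ∀ u w, ∃ b, ∀ x y, (x ∈ Set.range f ∨ x = u ∨ x = w) →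
      (y ∈ Set.range f ∨ y = u ∨ y = w) → x ≠ y → adjInd G x y = dartForm G f b x y) :
    ∃ b, ∀ x y, x ≠ y → adjInd G x y = dartForm G f b x y := by
  -- Some `b` has no obstruction consisting of a single vertex together with the dart.
  have hb : ∃ b, ∀ u x y, (x ∈ Set.range f ∨ x = u) → (y ∈ Set.range f ∨ y = u) → x ≠ y →
      adjInd G x y = dartForm G f b x y := by
    by_contra! hcon
    obtain ⟨u, x, y, hx, hy, hxy, hu⟩ := hcon 0
    obtain ⟨w, x', y', hx', hy', hxy', hw⟩ := hcon 1
    obtain ⟨b, hb⟩ := K u w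
    have : b = 0 ∨ b = 1 := by clear hb; revert b; decide
    rcases this with rfl | rfl
    · exact hu (hb x y (by tauto) (by tauto) hxy)
    · exact hw (hb x' y' (by tauto) (by tauto) hxy')
  obtain ⟨b, hb⟩ := hb
  refine ⟨b, fun x y hxy => ?_⟩
  by_cases hx : x ∈ Set.range f
  · exact hb y x y (.inl hx) (.inr rfl) hxy
  by_cases hy : y ∈ Set.range f
  · exact hb x x y (.inr rfl) (.inl hy) hxy
  obtain ⟨c, hc⟩ := K x y
  have hxyc := hc x y (by tauto) (by tauto) hxy
  by_cases hbc : b = c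
  · rw [hbc, hxyc]
  have h1 : f 1 ∈ Set.range f := ⟨1, rfl⟩
  have hxne : ∀ i, x ≠ f i := fun i h => hx ⟨i, h.symm⟩
  have hyne : ∀ i, y ≠ f i := fun i h => hy ⟨i, h.symm⟩
  have qx := adjInd_two_eq_zero G f hbc hx (hb x _ _ (.inr rfl) (.inl h1) (hxne 1))
    (hc _ _ (.inr (.inl rfl)) (.inl h1) (hxne 1))
  have qy := adjInd_two_eq_zero G f hbc hy (hb y _ _ (.inr rfl) (.inl h1) (hyne 1))
    (hc _ _ (.inr (.inr rfl)) (.inl h1) (hyne 1))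
  rw [hxyc]
  simp [dartForm, hxne, hyne, qx, qy]

lemma exists_rank_eq_minRank {V : Type*} [Fintype V] (G : SimpleGraph V) :
    ∃ A : Matrix V V (ZMod 2), IsGraphMatrix (ZMod 2) G A ∧ A.rank = minRank (ZMod 2) G := by
  classical
  refine Nat.sInf_mem (s := {r | ∃ A : Matrix V V (ZMod 2), IsGraphMatrix (ZMod 2) G A ∧
    A.rank = r}) ⟨_, Matrix.of (adjInd G), ⟨?_, ?_⟩, rfl⟩
  · ext x y
    exact adjInd_comm G y x
  · intro x y _
    simp [adjInd]

/-- If `G ∈ F₄(F₂, dart)`, then `G` has at most 7 vertices. -/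
theorem card_le_seven_of_forbRel_dart {V : Type*} [Fintype V] [DecidableEq V]
    (G : SimpleGraph V) (h : MemForbRel (ZMod 2) 4 dart G) :
    Fintype.card V ≤ 7 := by
  obtain ⟨h4, f, hf⟩ := h
  by_contra! hcard
  suffices K : ∃ b, ∀ x y, x ≠ y → adjInd G x y = dartForm G f b x y by
    obtain ⟨b, hb⟩ := K
    have := minRank_le_of_dartForm G f b hb
    omega
  refine exists_global_of_local G f fun u w => ?_
  obtain ⟨v, hv⟩ : ∃ v, v ∉ Finset.univ.image f ∪ {u, w} := by
    by_contra! hall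
    have h1 : Fintype.card V ≤ (Finset.univ.image f ∪ {u, w}).card :=
      Finset.card_le_card fun v _ => hall v
    have h2 := Finset.card_union_le (Finset.univ.image f) {u, w}
    have h3 : (Finset.univ.image f).card ≤ 5 := Finset.card_image_le
    have h5 : ({u, w} : Finset V).card ≤ 2 := Finset.card_le_two
    omega
  simp only [Finset.mem_union, Finset.mem_image, Finset.mem_univ, true_and, Finset.mem_insert,
    Finset.mem_singleton, not_or] at hv
  obtain ⟨hvf, hvu, hvw⟩ := hv
  obtain ⟨A, hA, hAr⟩ := exists_rank_eq_minRank (deleteVert G v)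
  have hrank := hf v hvf
  let f' : dart ↪g deleteVert G v :=
    { toFun := fun i => ⟨f i, fun hi => hvf ⟨i, hi⟩⟩
      inj' := fun i j hij => f.injective (congrArg Subtype.val hij)
      map_rel_iff' := f.map_adj_iff }
  obtain ⟨b, hb⟩ := exists_dartForm_of_rank_le _ f' hA (by omega)
  have hne : ∀ x, (x ∈ Set.range f ∨ x = u ∨ x = w) → x ≠ v := by
    rintro x (hx | rfl | rfl) rfl
    · exact hvf hx
    · exact hvu rfl
    · exact hvw rfl
  refine ⟨b, fun x y hx hy hxy => ?_⟩
  have key := hb ⟨x, hne x hx⟩ ⟨y, hne y hy⟩ (fun e => hxy (congrArg Subtype.val e))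
  have ha : ∀ s t, adjInd (deleteVert G v) s t = adjInd G s.1 t.1 := fun _ _ => rfl
  have hf' : ∀ i, (f' i).1 = f i := fun _ => rfl
  simp only [dartForm, ha, hf', Subtype.ext_iff] at key ⊢
  convert key
end
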